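/- Let m₁,…,m_k ≥ 1 with n = m₁+…+m_k, set M₀ = 0 and M_s = m₁+…+m_s. Let U ⊆ ℝⁿ be open and let λ₁,…,λ_k : U → ℝ be smooth with λ_r(x) ≠ λ_s(x) for all r ≠ s and all x ∈ U. Let K(x) be the n×n block-diagonal matrix with blocks J_{m₁}(λ₁(x)),…,J_{m_k}(λ_k(x)), and let σ₁,…,σₙ : U → ℝ be determined by det(t·I − K(x)) = tⁿ − σ₁(x)·t^{n−1} − … − σₙ(x). Then for every point x ∈ U the following are equivalent: (a) Σ_{m=1}^n Σ_{s=1}^n (∂σ_m/∂x^s)(x) · [K(x)^{n−m}]_{s,i} = 0 for every i ∈ {1,…,n} (with K⁰ = I); (b) (∂λ_s/∂x^{M_{s−1}+1})(x) = 0 for every s ∈ {1,…,k}. -/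

import Mathlib

open scoped BigOperators

/-- Partial derivative of `f : ℝⁿ → ℝ` in the `s`-th coordinate direction. -/
noncomputable def pd {n : ℕ} (f : (Fin n → ℝ) → ℝ) (s : Fin n) (x : Fin n → ℝ) : ℝ :=
  fderiv ℝ f x (Pi.single s 1)

/-- Partial sums of block sizes: `Msum m s = m 0 + … + m (s-1)`, so `Msum m 0 = 0`. -/
def Msum (m : ℕ → ℕ) (s : ℕ) : ℕ :=
  ∑ r ∈ Finset.range s, m r

/-- The (0-indexed) block to which the (0-indexed) position `i` belongs, for block sizes
`m 0, …, m (k-1)`. -/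
def blk (k : ℕ) (m : ℕ → ℕ) (i : ℕ) : ℕ :=
  ((Finset.range k).filter (fun s => Msum m (s + 1) ≤ i)).card

/-- The `n × n` block-diagonal matrix with Jordan blocks `J_{m 0}(lam 0), …, J_{m (k-1)}(lam (k-1))`
(evaluated at the point `x`). -/
noncomputable def KblockDiag {n : ℕ} (k : ℕ) (m : ℕ → ℕ) (lam : ℕ → (Fin n → ℝ) → ℝ)
    (x : Fin n → ℝ) : Matrix (Fin n) (Fin n) ℝ :=
  fun i j =>
    if (j : ℕ) = (i : ℕ) then lam (blk k m i) x
    else if (j : ℕ) = (i : ℕ) + 1 ∧ blk k m j = blk k m i then 1 else 0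

/-- The coefficient functions `σₘ` of the characteristic polynomial of a matrix-valued map,
in the convention `det(t·I − K(x)) = tⁿ − σ₁(x) t^{n−1} − … − σₙ(x)`. -/
noncomputable def sigmaCoeff {n : ℕ} (K : (Fin n → ℝ) → Matrix (Fin n) (Fin n) ℝ)
    (m : ℕ) (x : Fin n → ℝ) : ℝ :=
  -(Matrix.charpoly (K x)).coeff (n - m)

/-- The row vector `Vᵢ(x) = Σ_{m=1}^n Σ_{s=1}^n (∂σₘ/∂x^s)(x) · [K(x)^{n−m}]_{s,i}`. -/
noncomputable def Vvec {n : ℕ} (K : (Fin n → ℝ) → Matrix (Fin n) (Fin n) ℝ)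
    (i : Fin n) (x : Fin n → ℝ) : ℝ :=
  ∑ m ∈ Finset.Icc 1 n, ∑ s : Fin n, pd (sigmaCoeff K m) s x * ((K x) ^ (n - m)) s i

open Polynomial

lemma Msum_succ' (m : ℕ → ℕ) (s : ℕ) : Msum m (s + 1) = Msum m s + m s := by
  simp [Msum, Finset.sum_range_succ]

lemma Msum_mono' (m : ℕ → ℕ) : Monotone (Msum m) :=
  monotone_nat_of_le_succ (fun s => by rw [Msum_succ']; omega)

lemma blk_eq' (k : ℕ) (m : ℕ → ℕ) (q i : ℕ) (hq : q < k) (h1 : Msum m q ≤ i)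
    (h2 : i < Msum m (q + 1)) : blk k m i = q := by
  have : (Finset.range k).filter (fun s => Msum m (s + 1) ≤ i) = Finset.range q := by
    ext s
    simp only [Finset.mem_filter, Finset.mem_range]
    constructor
    · rintro ⟨_, h⟩
      by_contra hc
      have := Msum_mono' m (show q + 1 ≤ s + 1 by omega)
      omega
    · intro h
      have := Msum_mono' m (show s + 1 ≤ q by omega)
      exact ⟨by omega, by omega⟩
  rw [blk, this, Finset.card_range]

lemma exists_blk' (m : ℕ → ℕ) (k i : ℕ) (h : i < Msum m k) :
    ∃ q < k, Msum m q ≤ i ∧ i < Msum m (q + 1) := by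
  induction k with
  | zero => simp [Msum] at h
  | succ k ih =>
    by_cases hk : i < Msum m k
    · obtain ⟨q, hq, h'⟩ := ih hk
      exact ⟨q, by omega, h'⟩
    · exact ⟨k, by omega, by omega, h⟩

lemma prod_blk' {R : Type*} [CommMonoid R] (m : ℕ → ℕ) (k : ℕ) (f : ℕ → R) (k' : ℕ) (hk : k' ≤ k) :
    ∏ i ∈ Finset.range (Msum m k'), f (blk k m i) = ∏ q ∈ Finset.range k', f q ^ m q := by
  induction k' with
  | zero => simp [Msum]
  | succ k' ih =>
    rw [Msum_succ', Finset.prod_range_add, ih (by omega), Finset.prod_range_succ]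
    congr 1
    rw [Finset.prod_congr rfl (g := fun _ => f k')]
    · simp
    · intro j hj
      rw [Finset.mem_range] at hj
      rw [blk_eq' k m k' _ (by omega) (by omega) (by rw [Msum_succ']; omega)]

lemma charpoly_K' {n : ℕ} (k : ℕ) (m : ℕ → ℕ) (hn : n = Msum m k)
    (lam : ℕ → (Fin n → ℝ) → ℝ) (x : Fin n → ℝ) :
    (KblockDiag k m lam x).charpoly = ∏ q ∈ Finset.range k, (X - C (lam q x)) ^ m q := by
  rw [Matrix.charpoly_of_isUpperTriangular]
  · rw [← prod_blk' m k (fun q => X - C (lam q x)) k le_rfl, ← hn,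
      ← Fin.prod_univ_eq_prod_range (fun i => X - C (lam (blk k m i) x)) n]
    simp [KblockDiag]
  · intro i j hij
    have hij' : (j : ℕ) < i := hij
    have h1 : (j : ℕ) ≠ i := by omega
    have h2 : (j : ℕ) ≠ i + 1 := by omega
    simp [KblockDiag, h1, h2]

section rows
variable {n : ℕ} (k : ℕ) (m : ℕ → ℕ) (lam : ℕ → (Fin n → ℝ) → ℝ) (x : Fin n → ℝ)

lemma row_mid' (q : ℕ) (hq : q < k) (s s' : Fin n) (hs : (s' : ℕ) = s + 1)
    (h1 : Msum m q ≤ s) (h2 : (s : ℕ) + 1 < Msum m (q + 1))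
    (A : Matrix (Fin n) (Fin n) ℝ) (i : Fin n) :
    (KblockDiag k m lam x * A) s i = lam q x * A s i + A s' i := by
  have hK : ∀ j, KblockDiag k m lam x s j =
      lam q x * (1 : Matrix (Fin n) (Fin n) ℝ) s j + (1 : Matrix (Fin n) (Fin n) ℝ) s' j := by
    intro j
    have hb := blk_eq' k m q s hq h1 (by omega)
    have hb' := blk_eq' k m q s' hq (by omega) (by omega)
    simp only [KblockDiag, Matrix.one_apply, Fin.ext_iff]
    by_cases e1 : (j : ℕ) = s
    · have : ¬ ((s' : ℕ) = j) := by omega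
      simp [e1, hb, hs]
    · by_cases e2 : (j : ℕ) = s + 1
      · have e3 : j = s' := Fin.ext (by omega)
        subst e3
        have : ¬ ((s : ℕ) = j) := by omega
        rw [if_neg e1, if_pos ⟨e2, by rw [hb, hb']⟩, if_neg this, if_pos rfl]
        simp
      · have : ¬ ((s : ℕ) = j) := by omega
        have e5 : ¬ ((s' : ℕ) = j) := by omega
        rw [if_neg e1, if_neg (by tauto), if_neg this, if_neg e5]
        simp
  have hone : ∀ t : Fin n, ∑ j, (1 : Matrix (Fin n) (Fin n) ℝ) t j * A j i = A t i := by
    intro t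
    rw [← Matrix.mul_apply, one_mul]
  rw [Matrix.mul_apply]
  simp_rw [hK, add_mul, mul_assoc]
  rw [Finset.sum_add_distrib, ← Finset.mul_sum, hone, hone]

lemma row_last' (q : ℕ) (hq : q < k) (s : Fin n) (hn : n = Msum m k)
    (h1 : Msum m q ≤ s) (h2 : (s : ℕ) + 1 = Msum m (q + 1)) (hm : ∀ s < k, 1 ≤ m s)
    (A : Matrix (Fin n) (Fin n) ℝ) (i : Fin n) :
    (KblockDiag k m lam x * A) s i = lam q x * A s i := by
  have hK : ∀ j, KblockDiag k m lam x s j =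
      lam q x * (1 : Matrix (Fin n) (Fin n) ℝ) s j := by
    intro j
    have hb := blk_eq' k m q s hq h1 (by omega)
    simp only [KblockDiag, Matrix.one_apply, Fin.ext_iff]
    by_cases e1 : (j : ℕ) = s
    · simp [e1, hb]
    · have e4 : ¬ ((s : ℕ) = j) := by omega
      by_cases e2 : (j : ℕ) = s + 1
      · have hj := j.2
        obtain ⟨q', hq', h3, h4⟩ := exists_blk' m k j (by omega)
        have hb' := blk_eq' k m q' j hq' h3 h4
        have : q' ≠ q := by
          rintro rfl
          omega
        rw [if_neg e1, if_neg e4, if_neg]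
        · simp
        · rw [hb, hb']
          tauto
      · simp [e1, e2, e4]
  have hone : ∀ t : Fin n, ∑ j, (1 : Matrix (Fin n) (Fin n) ℝ) t j * A j i = A t i := by
    intro t
    rw [← Matrix.mul_apply, one_mul]
  rw [Matrix.mul_apply]
  simp_rw [hK, mul_assoc]
  rw [← Finset.mul_sum, hone]

lemma aeval_last' (q : ℕ) (hq : q < k) (s : Fin n) (hn : n = Msum m k)
    (h1 : Msum m q ≤ s) (h2 : (s : ℕ) + 1 = Msum m (q + 1)) (hm : ∀ s < k, 1 ≤ m s)
    (g : ℝ[X]) (i : Fin n) :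
    (aeval (KblockDiag k m lam x) g) s i
      = g.eval (lam q x) * (1 : Matrix (Fin n) (Fin n) ℝ) s i := by
  induction g using Polynomial.induction_on' with
  | add p q hp hq => simp [hp, hq, add_mul]
  | monomial d a =>
    have : ((KblockDiag k m lam x) ^ d) s i
        = lam q x ^ d * (1 : Matrix (Fin n) (Fin n) ℝ) s i := by
      induction d with
      | zero => simp
      | succ d ih =>
        rw [pow_succ', row_last' k m lam x q hq s hn h1 h2 hm, ih]
        ring
    rw [aeval_monomial, ← Algebra.smul_def, Matrix.smul_apply, this]
    simp [mul_assoc]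

lemma pow_first' (r : ℕ) (hr : r < k) (t : ℕ) (s s' : Fin n)
    (h1 : (s : ℕ) = Msum m r) (h2 : (s' : ℕ) = s + t) (ht : t < m r) (hn : n = Msum m k)
    (B : Matrix (Fin n) (Fin n) ℝ) (i : Fin n) :
    ((KblockDiag k m lam x - algebraMap ℝ _ (lam r x)) ^ t * B) s i = B s' i := by
  induction t generalizing B s' with
  | zero =>
    have : s' = s := Fin.ext (by omega)
    simp [this]
  | succ t ih =>
    have h3 := Msum_succ' m r
    have h4 := s'.2
    rw [pow_succ, mul_assoc, ih ⟨s + t, by omega⟩ rfl (by omega), sub_mul, Matrix.sub_apply,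
      row_mid' k m lam x r hr ⟨s + t, by omega⟩ s' (by simp; omega) (by simp; omega)
        (by simp; omega), ← Algebra.smul_def, Matrix.smul_apply]
    simp

/-- The cofactor polynomial. -/
noncomputable def Qpoly (r : ℕ) : ℝ[X] :=
  (X - C (lam r x)) ^ (m r - 1) * ∏ q ∈ (Finset.range k).erase r, (X - C (lam q x)) ^ m q

lemma Qpoly_mul (r : ℕ) (hr : r < k) (hm : ∀ s < k, 1 ≤ m s) :
    (X - C (lam r x)) * Qpoly k m lam x r = ∏ q ∈ Finset.range k, (X - C (lam q x)) ^ m q := by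
  rw [← Finset.mul_prod_erase _ _ (Finset.mem_range.2 hr), Qpoly, ← mul_assoc, ← pow_succ']
  rw [Nat.sub_add_cancel (hm r hr)]

lemma Qpoly_apply (r : ℕ) (hr : r < k) (hm : ∀ s < k, 1 ≤ m s) (hn : n = Msum m k)
    (hd : ∀ q < k, q ≠ r → lam q x ≠ lam r x) :
    ∃ c : ℝ, c ≠ 0 ∧ ∀ s i : Fin n, aeval (KblockDiag k m lam x) (Qpoly k m lam x r) s i =
      if (s : ℕ) = Msum m r ∧ (i : ℕ) + 1 = Msum m (r + 1) then c else 0 := by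
  set K := KblockDiag k m lam x with hK
  set A := aeval K (Qpoly k m lam x r) with hA
  have hKA : K * A = lam r x • A := by
    have := Matrix.aeval_self_charpoly K
    rw [hK, charpoly_K' k m hn, ← Qpoly_mul k m lam x r hr hm, map_mul, ← hK, ← hA, map_sub,
      aeval_X, aeval_C, sub_mul, sub_eq_zero, ← Algebra.smul_def] at this
    exact this
  have hms := Msum_succ' m
  have hkn : ∀ q < k, Msum m (q + 1) ≤ n := fun q hq => hn ▸ Msum_mono' m hq
  -- rows of other blocks vanish
  have hother : ∀ q < k, q ≠ r → ∀ t : ℕ, ∀ s : Fin n, Msum m q ≤ s →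
      (s : ℕ) + 1 + t = Msum m (q + 1) → ∀ i, A s i = 0 := by
    intro q hq hqr t
    induction t with
    | zero =>
      intro s h1 h2 i
      have h := row_last' k m lam x q hq s hn h1 h2 hm A i
      rw [← hK, hKA, Matrix.smul_apply, smul_eq_mul] at h
      have h' : (lam q x - lam r x) * A s i = 0 := by linear_combination -h
      exact (mul_eq_zero.1 h').resolve_left (sub_ne_zero.2 (hd q hq hqr))
    | succ t ih =>
      intro s h1 h2 i
      have := hkn q hq
      have h := row_mid' k m lam x q hq s ⟨s + 1, by omega⟩ rfl h1 (by omega) A i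
      rw [← hK, hKA, Matrix.smul_apply, smul_eq_mul,
        ih ⟨s + 1, by omega⟩ (by simp; omega) (by simp; omega)] at h
      have h' : (lam q x - lam r x) * A s i = 0 := by linear_combination -h
      exact (mul_eq_zero.1 h').resolve_left (sub_ne_zero.2 (hd q hq hqr))
  refine ⟨(∏ q ∈ (Finset.range k).erase r, (X - C (lam q x)) ^ m q).eval (lam r x), ?_, ?_⟩
  · rw [eval_prod, Finset.prod_ne_zero_iff]
    intro q hq
    rw [Finset.mem_erase, Finset.mem_range] at hq
    simp only [eval_pow, eval_sub, eval_X, eval_C]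
    exact pow_ne_zero _ (sub_ne_zero.2 (hd q hq.2 hq.1).symm)
  · intro s i
    obtain ⟨q, hq, h1, h2⟩ := exists_blk' m k s (hn ▸ s.2)
    by_cases hqr : q = r
    · subst hqr
      by_cases hs : (s : ℕ) = Msum m q
      · have h3 := hm q hq
        have h4 := hkn q hq
        have h5 := hms q
        have := pow_first' k m lam x q hq (m q - 1) s ⟨s + (m q - 1), by omega⟩ hs rfl (by omega) hn
          (aeval K (∏ q' ∈ (Finset.range k).erase q, (X - C (lam q' x)) ^ m q')) i
        rw [aeval_last' k m lam x q hq _ hn (by simp; omega) (by simp; omega) hm] at this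
        have hAe : A = (KblockDiag k m lam x - algebraMap ℝ _ (lam q x)) ^ (m q - 1) *
          (aeval K (∏ q' ∈ (Finset.range k).erase q, (X - C (lam q' x)) ^ m q')) := by
          rw [hA, Qpoly, map_mul, map_pow, map_sub, aeval_X, aeval_C]
        rw [hAe, this, Matrix.one_apply]
        simp only [Fin.ext_iff, hs, true_and]
        by_cases hi : (i : ℕ) + 1 = Msum m (q + 1)
        · rw [if_pos hi, if_pos (by omega), mul_one]
        · rw [if_neg hi, if_neg (by omega), mul_zero]
      · rw [if_neg (by tauto)]
        have hsn := s.2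
        have h := row_mid' k m lam x q hq ⟨s - 1, by omega⟩ s (by simp; omega) (by simp; omega)
          (by simp; omega) A i
        rw [← hK, hKA, Matrix.smul_apply, smul_eq_mul] at h
        linarith
    · rw [hother q hq hqr (Msum m (q + 1) - s - 1) s h1 (by omega), if_neg]
      rintro ⟨h3, -⟩
      have h5 := hms r
      have h6 := hm r hr
      rcases lt_or_gt_of_ne hqr with h | h
      · have := Msum_mono' m (show q + 1 ≤ r by omega)
        omega
      · have := Msum_mono' m (show r + 1 ≤ q by omega)
        omega

end rows

/-- Coefficientwise differentiability of a family of polynomials. -/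
def HD {E : Type*} [NormedAddCommGroup E] [NormedSpace ℝ E] (p : E → ℝ[X]) (p' : E → ℝ[X])
    (x : E) : Prop :=
  ∀ d, ∃ L : E →L[ℝ] ℝ, HasFDerivAt (fun y => (p y).coeff d) L x ∧ ∀ v, L v = (p' v).coeff d

section HDsec
variable {E : Type*} [NormedAddCommGroup E] [NormedSpace ℝ E]

lemma HD.mul' {p q p' q' : E → ℝ[X]} {x : E} (hp : HD p p' x) (hq : HD q q' x) :
    HD (fun y => p y * q y) (fun v => p' v * q x + p x * q' v) x := by
  intro d
  choose Lp hp1 hp2 using hp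
  choose Lq hq1 hq2 using hq
  simp_rw [coeff_mul]
  refine ⟨_, HasFDerivAt.fun_sum (fun u _ => (hp1 u.1).mul (hq1 u.2)), ?_⟩
  intro v
  rw [ContinuousLinearMap.sum_apply, coeff_add, coeff_mul, coeff_mul, ← Finset.sum_add_distrib]
  refine Finset.sum_congr rfl fun u _ => ?_
  simp [hp2, hq2]
  ring

lemma HD.const' (p : ℝ[X]) (x : E) : HD (fun _ => p) (fun _ => 0) x := by
  intro d
  exact ⟨0, hasFDerivAt_const _ _, by simp⟩

lemma HD.congr' {p p' q' : E → ℝ[X]} {x : E} (hp : HD p p' x) (h : ∀ v, p' v = q' v) :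
    HD p q' x := by
  have : p' = q' := funext h
  rwa [← this]

lemma HD.lin' {f : E → ℝ} {x : E} (hf : DifferentiableAt ℝ f x) :
    HD (fun y => X - C (f y)) (fun v => - C (fderiv ℝ f x v)) x := by
  intro d
  by_cases hd : d = 0
  · subst hd
    refine ⟨- fderiv ℝ f x, ?_, by simp⟩
    simpa using hf.hasFDerivAt.fun_neg
  · refine ⟨0, ?_, by simp [coeff_C, hd]⟩
    simp only [coeff_sub, coeff_C, hd, if_false]
    exact hasFDerivAt_const _ _

lemma HD.pow' {p p' : E → ℝ[X]} {x : E} (hp : HD p p' x) (a : ℕ) :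
    HD (fun y => p y ^ a) (fun v => (a : ℝ[X]) * p x ^ (a - 1) * p' v) x := by
  induction a with
  | zero => simpa using HD.const' (1 : ℝ[X]) x
  | succ a ih =>
    simp_rw [pow_succ]
    refine (ih.mul' hp).congr' fun v => ?_
    rcases a with _ | a
    · simp
    · simp only [Nat.add_sub_cancel]
      push_cast
      ring

lemma HD.prod' {p p' : ℕ → E → ℝ[X]} {x : E} (S : Finset ℕ) (hp : ∀ s ∈ S, HD (p s) (p' s) x) :
    HD (fun y => ∏ s ∈ S, p s y) (fun v => ∑ s ∈ S, p' s v * ∏ q ∈ S.erase s, p q x) x := by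
  induction S using Finset.induction_on with
  | empty => simpa using HD.const' (1 : ℝ[X]) x
  | insert a S ha ih =>
    simp_rw [Finset.prod_insert ha]
    refine ((hp a (by simp)).mul' (ih fun s hs => hp s (by simp [hs]))).congr' fun v => ?_
    rw [Finset.sum_insert ha, Finset.erase_insert ha, Finset.mul_sum]
    congr 1
    refine Finset.sum_congr rfl fun s hs => ?_
    have hne : a ≠ s := by
      rintro rfl
      exact ha hs
    rw [Finset.erase_insert_of_ne hne, Finset.prod_insert (by simp [ha])]
    ring

end HDsec

lemma Vvec_formula {n : ℕ} (k : ℕ) (m : ℕ → ℕ)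
    (hm : ∀ s < k, 1 ≤ m s) (hn : n = Msum m k) (lam : ℕ → (Fin n → ℝ) → ℝ) (x : Fin n → ℝ)
    (hdiff : ∀ s < k, DifferentiableAt ℝ (lam s) x) (i : Fin n) :
    Vvec (KblockDiag k m lam) i x = ∑ s : Fin n, ∑ r ∈ Finset.range k,
      (m r : ℝ) * pd (lam r) s x * aeval (KblockDiag k m lam x) (Qpoly k m lam x r) s i := by
  have hHD : HD (fun y => (KblockDiag k m lam y).charpoly)
      (fun v => - ∑ r ∈ Finset.range k, ((m r : ℝ) * fderiv ℝ (lam r) x v) • Qpoly k m lam x r)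
      x := by
    simp_rw [charpoly_K' k m hn]
    refine (HD.prod' (Finset.range k) fun s hs =>
      (HD.lin' (hdiff s (Finset.mem_range.1 hs))).pow' (m s)).congr' fun v => ?_
    rw [← Finset.sum_neg_distrib]
    refine Finset.sum_congr rfl fun r _ => ?_
    rw [Qpoly, smul_eq_C_mul, C_mul]
    simp only [map_natCast]
    ring
  have hdeg : ∀ r ∈ Finset.range k, (Qpoly k m lam x r).natDegree < n := by
    intro r hr
    have hr := Finset.mem_range.1 hr
    have h1 := Qpoly_mul k m lam x r hr hm
    rw [← charpoly_K' k m hn] at h1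
    have h2 := congrArg natDegree h1
    rw [Matrix.charpoly_natDegree_eq_dim, Fintype.card_fin, (monic_X_sub_C _).natDegree_mul',
      natDegree_X_sub_C] at h2
    · omega
    · intro h0
      rw [h0, mul_zero] at h1
      exact (Matrix.charpoly_monic (KblockDiag k m lam x)).ne_zero h1.symm
  have hpd : ∀ a s, pd (sigmaCoeff (KblockDiag k m lam) a) s x =
      ∑ r ∈ Finset.range k, (m r : ℝ) * pd (lam r) s x * (Qpoly k m lam x r).coeff (n - a) := by
    intro a s
    obtain ⟨L, hL, hL2⟩ := hHD (n - a)
    have : HasFDerivAt (sigmaCoeff (KblockDiag k m lam) a) (-L) x := hL.neg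
    rw [pd, this.fderiv, ContinuousLinearMap.neg_apply, hL2, coeff_neg, neg_neg, finset_sum_coeff]
    simp [pd]
  rw [Vvec, Finset.sum_comm]
  refine Finset.sum_congr rfl fun s _ => ?_
  simp_rw [hpd, Finset.sum_mul]
  rw [Finset.sum_comm]
  refine Finset.sum_congr rfl fun r hr => ?_
  rw [aeval_eq_sum_range' (hdeg r hr), Matrix.sum_apply, Finset.mul_sum]
  refine Finset.sum_bij' (fun a _ => n - a) (fun d _ => n - d) ?_ ?_ ?_ ?_ ?_
  · intro a ha
    simp only [Finset.mem_Icc, Finset.mem_range] at *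
    omega
  · intro a ha
    simp only [Finset.mem_Icc, Finset.mem_range] at *
    omega
  · intro a ha
    simp only [Finset.mem_Icc] at *
    omega
  · intro a ha
    simp only [Finset.mem_range] at *
    omega
  · intro a ha
    rw [Matrix.smul_apply, smul_eq_mul]
    ring

theorem Vvec_vanishes_iff_weaklyNonlinear_blockDiag (k : ℕ) (m : ℕ → ℕ)
    (hm : ∀ s < k, 1 ≤ m s)
    {n : ℕ} (hn : n = Msum m k)
    (U : Set (Fin n → ℝ)) (hU : IsOpen U)
    (lam : ℕ → (Fin n → ℝ) → ℝ)
    (hlam : ∀ s < k, ContDiffOn ℝ (⊤ : ℕ∞) (lam s) U)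
    (hdist : ∀ r < k, ∀ s < k, r ≠ s → ∀ x ∈ U, lam r x ≠ lam s x) :
    ∀ x ∈ U,
      ((∀ i : Fin n, Vvec (KblockDiag k m lam) i x = 0) ↔
        (∀ s < k, ∀ j0 : Fin n, (j0 : ℕ) = Msum m s → pd (lam s) j0 x = 0)) := by

  intro x hx
  have hdiff : ∀ s < k, DifferentiableAt ℝ (lam s) x := fun s hs =>
    ((hlam s hs).contDiffAt (hU.mem_nhds hx)).differentiableAt (by simp)
  have hc : ∀ r, ∃ c : ℝ, r < k → c ≠ 0 ∧ ∀ s i : Fin n,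
      aeval (KblockDiag k m lam x) (Qpoly k m lam x r) s i =
      if (s : ℕ) = Msum m r ∧ (i : ℕ) + 1 = Msum m (r + 1) then c else 0 := by
    intro r
    by_cases hr : r < k
    · obtain ⟨c, h⟩ := Qpoly_apply k m lam x r hr hm hn
        (fun q hq hqr => hdist q hq r hr hqr x hx)
      exact ⟨c, fun _ => h⟩
    · exact ⟨0, fun h => absurd h hr⟩
  choose c hc using hc
  constructor
  · intro h r hr j0 hj0
    have h1 := hm r hr
    have h2 := Msum_succ' m r
    have h3 : Msum m (r + 1) ≤ n := hn ▸ Msum_mono' m hr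
    have hV := h ⟨Msum m (r + 1) - 1, by omega⟩
    rw [Vvec_formula k m hm hn lam x hdiff, Finset.sum_eq_single j0,
      Finset.sum_eq_single r] at hV
    · rw [(hc r hr).2, if_pos ⟨hj0, by simp; omega⟩] at hV
      have h5 : (m r : ℝ) ≠ 0 := by
        have : m r ≠ 0 := by omega
        exact_mod_cast this
      have h6 := (hc r hr).1
      simpa [h5, h6] using hV
    · intro q hq hqr
      have hq := Finset.mem_range.1 hq
      rw [(hc q hq).2, if_neg, mul_zero]
      rintro ⟨h7, -⟩
      have h8 := hm q hq
      have h9 := Msum_succ' m q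
      rcases lt_or_gt_of_ne hqr with h | h
      · have := Msum_mono' m (show q + 1 ≤ r by omega)
        omega
      · have := Msum_mono' m (show r + 1 ≤ q by omega)
        omega
    · intro h
      exact absurd (Finset.mem_range.2 hr) h
    · intro s _ hs
      refine Finset.sum_eq_zero fun q hq => ?_
      have hq := Finset.mem_range.1 hq
      rw [(hc q hq).2, if_neg, mul_zero]
      rintro ⟨h7, h10⟩
      simp only at h10
      have h8 := hm q hq
      have h9 := Msum_succ' m q
      rcases lt_trichotomy q r with h | h | h
      · have := Msum_mono' m (show q + 1 ≤ r by omega)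
        omega
      · subst h
        exact hs (Fin.ext (by omega))
      · have := Msum_mono' m (show r + 1 ≤ q by omega)
        omega
    · simp
  · intro h i
    rw [Vvec_formula k m hm hn lam x hdiff]
    refine Finset.sum_eq_zero fun s _ => Finset.sum_eq_zero fun r hr => ?_
    have hr := Finset.mem_range.1 hr
    rw [(hc r hr).2]
    split_ifs with h1
    · rw [h r hr s h1.1]
      simp
    · simp
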